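/- Let (G,⊢,⊣,1,⁻¹) be a digroup, let E := { e ∈ G : e⊢x = x and x⊣e = x for all x } be its set of bar-units, let J := { x⁻¹ : x ∈ G } be its set of inverses, and let ∘ denote conjugation x∘y := x⊢(y⊣x⁻¹). Then the map θ : E × J → G defined by θ(u,h) := u⊣h is a bijection, and for all u,v ∈ E, h,k ∈ J: θ(u,h)⊢θ(v,k) = θ(h∘v, h⊢k) and θ(u,h)⊣θ(v,k) = θ(u, h⊣k). -/

import Mathlib

/-- A digroup: a set `G` with two associative operations `⊢` (`lhd`) and `⊣` (`dhv`),
a distinguished bar-unit `one`, and an inversion `inv`, satisfying the digroup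
axioms (G1)–(G6). -/
class Digroup (G : Type*) where
  lhd : G → G → G           -- `x ⊢ y`
  dhv : G → G → G           -- `x ⊣ y`
  one : G
  inv : G → G
  lhd_assoc : ∀ x y z : G, lhd (lhd x y) z = lhd x (lhd y z)
  dhv_assoc : ∀ x y z : G, dhv (dhv x y) z = dhv x (dhv y z)
  G2 : ∀ x y z : G, lhd x (dhv y z) = dhv (lhd x y) z
  G3 : ∀ x y z : G, dhv x (lhd y z) = dhv x (dhv y z)
  G4 : ∀ x y z : G, lhd (dhv x y) z = lhd (lhd x y) z
  one_lhd : ∀ x : G, lhd one x = x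
  dhv_one : ∀ x : G, dhv x one = x
  lhd_inv : ∀ x : G, lhd x (inv x) = one
  inv_dhv : ∀ x : G, dhv (inv x) x = one

open Digroup

/-- Conjugation in a digroup: `x ∘ y := x ⊢ (y ⊣ x⁻¹)`. -/
def Digroup.conj {G : Type*} [Digroup G] (x y : G) : G := lhd x (dhv y (inv x))

/-!
Every `x` factors as `(x ⊣ x⁻¹) ⊣ x⁻¹⁻¹`, and `x ⊣ x⁻¹` is a bar-unit. The factorization is unique:
bar-units are invisible to the right of `⊣`, so `1 ⊣ (u ⊣ h) = 1 ⊣ h`, which equals `h` when `h` is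
an inverse; once `h` is known, `u` is recovered because right `⊣`-translations are injective.
-/

namespace Digroup

/-- Membership in the set `E` of bar-units, the elements neutral on the left for `⊢` and on the
right for `⊣`. A digroup may have many of them besides `one`. -/
def IsBarUnit {G : Type*} [Digroup G] (e : G) : Prop :=
  ∀ x : G, lhd e x = x ∧ dhv x e = x

/-- Membership in the set `J` of inverses, the image of `inv`. Since `inv (inv x)` may differ
from `x`, this is in general a proper subset of the digroup. -/
def IsInverse {G : Type*} [Digroup G] (h : G) : Prop :=
  ∃ x : G, h = inv x

variable {G : Type*} [Digroup G]

theorem lhd_inv_cancel_left (x y : G) : lhd x (lhd (inv x) y) = y := by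
  rw [← lhd_assoc, lhd_inv, one_lhd]

theorem inv_dhv_cancel_right (x y : G) : dhv (dhv x (inv y)) y = x := by
  rw [dhv_assoc, inv_dhv, dhv_one]

theorem dhv_inv_cancel_right (x y : G) : dhv (dhv x y) (inv y) = x := by
  rw [dhv_assoc, ← G3, lhd_inv, dhv_one]

theorem dhv_left_injective (y : G) : Function.Injective fun x : G => dhv x y :=
  Function.LeftInverse.injective (g := fun x => dhv x (inv y)) fun x => dhv_inv_cancel_right x y

theorem isBarUnit_dhv_inv (x : G) : IsBarUnit (dhv x (inv x)) := fun y =>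
  ⟨by rw [G4, lhd_assoc, lhd_inv_cancel_left], by rw [← dhv_assoc, dhv_inv_cancel_right]⟩

theorem IsInverse.one_dhv {h : G} (hh : IsInverse h) : dhv one h = h := by
  obtain ⟨x, rfl⟩ := hh
  rw [← inv_dhv x, dhv_inv_cancel_right]

theorem IsBarUnit.dhv_dhv {u : G} (hu : IsBarUnit u) (x y : G) : dhv x (dhv u y) = dhv x y := by
  rw [← dhv_assoc, (hu x).2]

theorem IsBarUnit.dhv_lhd {u : G} (hu : IsBarUnit u) (x y : G) : lhd (dhv u x) y = lhd x y := by
  rw [G4, lhd_assoc, (hu _).1]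

theorem conj_dhv_self (x y : G) : dhv (conj x y) x = lhd x y := by
  rw [conj, G2, inv_dhv_cancel_right]

theorem barUnit_dhv_inverse_injective :
    Function.Injective
      (fun p : {e : G // IsBarUnit e} × {h : G // IsInverse h} => dhv p.1.val p.2.val) := by
  rintro ⟨⟨u, hu⟩, ⟨h, hh⟩⟩ ⟨⟨v, hv⟩, ⟨k, hk⟩⟩ (huv : dhv u h = dhv v k)
  have hhk : h = k := by
    calc h = dhv one (dhv u h) := by rw [hu.dhv_dhv, hh.one_dhv]
      _ = dhv one (dhv v k) := by rw [huv]
      _ = k := by rw [hv.dhv_dhv, hk.one_dhv]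
  subst hhk
  obtain rfl : u = v := dhv_left_injective h huv
  rfl

theorem barUnit_dhv_inverse_surjective :
    Function.Surjective
      (fun p : {e : G // IsBarUnit e} × {h : G // IsInverse h} => dhv p.1.val p.2.val) := fun x =>
  ⟨⟨⟨dhv x (inv x), isBarUnit_dhv_inv x⟩, ⟨inv (inv x), inv x, rfl⟩⟩,
    dhv_inv_cancel_right x (inv x)⟩

theorem IsBarUnit.dhv_lhd_dhv {u : G} (hu : IsBarUnit u) (v h k : G) :
    lhd (dhv u h) (dhv v k) = dhv (conj h v) (lhd h k) :=
  calc lhd (dhv u h) (dhv v k) = dhv (lhd h v) k := by rw [hu.dhv_lhd, G2]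
    _ = dhv (dhv (conj h v) h) k := by rw [conj_dhv_self]
    _ = dhv (conj h v) (lhd h k) := by rw [dhv_assoc, G3]

theorem IsBarUnit.dhv_dhv_dhv {v : G} (hv : IsBarUnit v) (u h k : G) :
    dhv (dhv u h) (dhv v k) = dhv u (dhv h k) := by
  rw [hv.dhv_dhv, dhv_assoc]

end Digroup

theorem digroup_product_structure_general {G : Type*} [Digroup G] :
    Function.Bijective
      (fun p : {e : G // IsBarUnit e} × {h : G // IsInverse h} => dhv p.1.val p.2.val) ∧
    (∀ u v h k : G, IsBarUnit u →
      lhd (dhv u h) (dhv v k) = dhv (conj h v) (lhd h k)) ∧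
    (∀ u v h k : G, IsBarUnit v →
      dhv (dhv u h) (dhv v k) = dhv u (dhv h k)) :=
  ⟨⟨barUnit_dhv_inverse_injective, barUnit_dhv_inverse_surjective⟩,
    fun _ v h k hu => hu.dhv_lhd_dhv v h k,
    fun u _ h k hv => hv.dhv_dhv_dhv u h k⟩

/-- Let `G` be a digroup, `E` its set of bar-units and `J := {x⁻¹ : x ∈ G}`
its set of inverses. Then `θ : E × J → G, θ(u,h) := u ⊣ h` is a bijection, and
`θ(u,h) ⊢ θ(v,k) = θ(h∘v, h⊢k)` and `θ(u,h) ⊣ θ(v,k) = θ(u, h⊣k)` for `u,v ∈ E`,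
`h,k ∈ J`. -/
theorem digroup_product_structure {G : Type*} [Digroup G] :
    Function.Bijective
      (fun p : {e : G // ∀ x : G, lhd e x = x ∧ dhv x e = x} × {h : G // ∃ x : G, h = inv x} =>
        dhv p.1.val p.2.val) ∧
    (∀ u v h k : G,
      (∀ x, lhd u x = x ∧ dhv x u = x) → (∀ x, lhd v x = x ∧ dhv x v = x) →
      (∃ x, h = inv x) → (∃ x, k = inv x) →
      lhd (dhv u h) (dhv v k) = dhv (conj h v) (lhd h k) ∧
      dhv (dhv u h) (dhv v k) = dhv u (dhv h k)) := by
  obtain ⟨bijective, lhd_formula, dhv_formula⟩ := digroup_product_structure_general (G := G)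
  exact ⟨bijective, fun u v h k hu hv _ _ => ⟨lhd_formula u v h k hu, dhv_formula u v h k hv⟩⟩
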